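/- Existence of an exponentially growing and an exponentially decaying solution (Levinson-type, special case): Let β > 0, γ ∈ (1/2, 1), and let R : [0,∞) → M^{2×2}(ℂ) be measurable with ∫₀^∞ ‖R(x)‖ dx < ∞. Then the system u′(x) = ( (β/x^γ) diag(1,−1) + R(x) ) u(x) on (0,∞) has solutions u₊, u₋ with u₊(x) = exp(β x^{1−γ}/(1−γ))(e₊ + o(1)) and u₋(x) = exp(−β x^{1−γ}/(1−γ))(e₋ + o(1)) as x → +∞, where e₊ = (1,0)ᵀ and e₋ = (0,1)ᵀ. -/

import Mathlib

open MeasureTheory Real Filter Topology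

/-!
Write `Λ` for a primitive of the diagonal coefficient. In the unknown `v = exp (-Λ k) u`, the
equation `u' = (Λ' + R) u` becomes by variation of constants `v = eₖ + ∫ G(x, t) R(t) v(t) dt`,
where `G` is the diagonal Green kernel with entries `± exp (Φ i x - Φ i t)`, `Φ i = Λ i - Λ k`, and
one is free to integrate each component from the left endpoint or from infinity. The dichotomy
condition is what makes a choice available for which `G` is bounded and, as `x → ∞`, tends to `0`.
As `R` is integrable, after cutting `R` off to `[b, ∞)` with `b` large the integral operator is a
contraction of the bounded continuous functions, and dominated convergence gives `v → eₖ`.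

The resulting solution is continued from `b` back to the initial point by solving the linear
integral equation there; an exponential weight in the sup norm makes its Volterra kernel
contractive however large the coefficient is.
-/

section AbsolutelyContinuous

variable {X Y E F : Type*} [PseudoMetricSpace X] [PseudoMetricSpace Y]
  [NormedAddCommGroup E] [NormedSpace ℝ E] [NormedAddCommGroup F] [NormedSpace ℝ F]
  {a b : ℝ}

theorem absolutelyContinuousOnInterval_of_dist_le {f : ℝ → X} {g : ℝ → Y} (C : ℝ)
    (hg : AbsolutelyContinuousOnInterval g a b)
    (h : ∀ x ∈ Set.uIcc a b, ∀ y ∈ Set.uIcc a b, dist (f x) (f y) ≤ C * dist (g x) (g y)) :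
    AbsolutelyContinuousOnInterval f a b := by
  refine squeeze_zero' (.of_forall fun I => Finset.sum_nonneg fun _ _ => dist_nonneg) ?_
    (by simpa using Tendsto.const_mul C hg)
  filter_upwards [mem_inf_of_right (mem_principal_self _)] with I hI
  rw [Finset.mul_sum]
  exact Finset.sum_le_sum fun i hi => h _ (hI.1 i hi).1 _ (hI.1 i hi).2

theorem absolutelyContinuousOnInterval_comp_of_contDiff [ProperSpace E] {g : E → F} {f : ℝ → E}
    (hg : ContDiff ℝ 1 g) (hf : AbsolutelyContinuousOnInterval f a b) :
    AbsolutelyContinuousOnInterval (g ∘ f) a b := by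
  obtain ⟨B, hB⟩ := hf.exists_bound
  obtain ⟨K, hK⟩ := hg.contDiffOn.exists_lipschitzOnWith one_ne_zero
    (convex_closedBall (0 : E) B) (isCompact_closedBall 0 B)
  exact absolutelyContinuousOnInterval_of_dist_le K hf fun x hx y hy =>
    hK.dist_le_mul _ (mem_closedBall_zero_iff.2 (hB x hx)) _ (mem_closedBall_zero_iff.2 (hB y hy))

end AbsolutelyContinuous

/-- Carathéodory solutions on `s` of the differential equation `u' = f(t, u)`, recorded by the
integral equation. Integrability of `t ↦ f(t, u(t))` between points of `s` is part of the notion,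
so that the integrals are not junk values. -/
def IsCaratheodorySolutionOn {E : Type*} [NormedAddCommGroup E] [NormedSpace ℝ E]
    (f : ℝ → E → E) (u : ℝ → E) (s : Set ℝ) : Prop :=
  ∀ ⦃x⦄, x ∈ s → ∀ ⦃y⦄, y ∈ s → IntervalIntegrable (fun t => f t (u t)) volume x y ∧
    u y = u x + ∫ t in x..y, f t (u t)

namespace IsCaratheodorySolutionOn

variable {E : Type*} [NormedAddCommGroup E] [NormedSpace ℝ E] {f g : ℝ → E → E} {u w : ℝ → E}
  {s : Set ℝ} {x y b : ℝ}

theorem of_base_point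
    (h : ∀ y ∈ s, IntervalIntegrable (fun t => f t (u t)) volume b y ∧
      u y = u b + ∫ t in b..y, f t (u t)) :
    IsCaratheodorySolutionOn f u s := fun x hx y hy => by
  refine ⟨(h x hx).1.symm.trans (h y hy).1, ?_⟩
  rw [(h y hy).2, (h x hx).2, add_assoc,
    intervalIntegral.integral_add_adjacent_intervals (h x hx).1 ((h x hx).1.symm.trans (h y hy).1)]

theorem congr (h : IsCaratheodorySolutionOn f u s) (hs : s.OrdConnected) (huw : Set.EqOn u w s)
    (hfg : ∀ t ∈ s, f t (u t) = g t (w t)) : IsCaratheodorySolutionOn g w s := fun x hx y hy => by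
  have hxy : Set.EqOn (fun t => f t (u t)) (fun t => g t (w t)) (Set.uIcc x y) :=
    fun t ht => hfg t (hs.uIcc_subset hx hy ht)
  rw [← huw hx, ← huw hy, ← intervalIntegral.integral_congr hxy]
  exact ⟨(h hx hy).1.congr (hxy.mono Set.uIoc_subset_uIcc), (h hx hy).2⟩

theorem mono {s' : Set ℝ} (h : IsCaratheodorySolutionOn f u s) (hs : s' ⊆ s) :
    IsCaratheodorySolutionOn f u s' := fun _ hx _ hy => h (hs hx) (hs hy)

theorem const_add {g : ℝ → E} (h : IsCaratheodorySolutionOn (fun t _ => g t) u s) (c : E) :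
    IsCaratheodorySolutionOn (fun t _ => g t) (fun x => c + u x) s := fun x hx y hy =>
  ⟨(h hx hy).1, by simp only [(h hx hy).2, add_assoc]⟩

theorem absolutelyContinuousOnInterval (h : IsCaratheodorySolutionOn f u s)
    (hs : s.OrdConnected) (hx : x ∈ s) (hy : y ∈ s) : AbsolutelyContinuousOnInterval u x y := by
  have hxy := (h hx hy).1.norm
  refine absolutelyContinuousOnInterval_of_dist_le 1
    (hxy.absolutelyContinuousOnInterval_intervalIntegral Set.left_mem_uIcc) fun p hp q hq => ?_
  have hint := fun z (hz : z ∈ Set.uIcc x y) =>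
    hxy.mono_set (Set.uIcc_subset_uIcc_left hz)
  rw [one_mul, dist_comm, dist_comm (∫ _ in _..p, _), dist_eq_norm, dist_eq_norm,
    (h (hs.uIcc_subset hx hy hp) (hs.uIcc_subset hx hy hq)).2, add_sub_cancel_left,
    intervalIntegral.integral_interval_sub_left (hint q hq) (hint p hp)]
  exact intervalIntegral.norm_integral_le_abs_integral_norm

theorem continuousOn_Ici (h : IsCaratheodorySolutionOn f u (Set.Ici b)) :
    ContinuousOn u (Set.Ici b) := fun x hx => by
  have hc := (h.absolutelyContinuousOnInterval Set.ordConnected_Ici Set.self_mem_Ici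
    (y := x + 1) (Set.mem_Ici.2 (le_add_of_le_of_nonneg hx zero_le_one))).continuousOn
  rw [Set.uIcc_of_le (le_add_of_le_of_nonneg hx zero_le_one)] at hc
  refine (hc x ⟨hx, by linarith⟩).mono_of_mem_nhdsWithin ?_
  exact inter_mem_nhdsWithin _ (Iic_mem_nhds (lt_add_one x))

variable [CompleteSpace E]

theorem ae_hasDerivAt (h : IsCaratheodorySolutionOn f u s) (hs : s.OrdConnected) (hx : x ∈ s)
    (hy : y ∈ s) : ∀ᵐ t, t ∈ Set.uIcc x y → HasDerivAt u (f t (u t)) t := by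
  filter_upwards [(h hx hy).1.ae_hasDerivAt_integral, Measure.ae_ne volume x,
    Measure.ae_ne volume y] with t ht htx hty htm
  refine ((ht htm x Set.left_mem_uIcc).const_add (u x)).congr_of_eventuallyEq ?_
  have hnhds : Set.uIcc x y ∈ 𝓝 t := by
    refine Icc_mem_nhds (htm.1.lt_of_ne ?_) (htm.2.lt_of_ne ?_) <;> grind
  filter_upwards [hnhds] with z hz using (h hx (hs.uIcc_subset hx hy hz)).2

theorem of_ae_hasDerivAt {g : ℝ → E}
    (hu : ∀ x ∈ s, ∀ y ∈ s, AbsolutelyContinuousOnInterval u x y)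
    (hg : ∀ x ∈ s, ∀ y ∈ s, IntervalIntegrable g volume x y)
    (hd : ∀ x ∈ s, ∀ y ∈ s, ∀ᵐ t, t ∈ Set.uIcc x y → HasDerivAt u (g t) t) :
    IsCaratheodorySolutionOn (fun t _ => g t) u s := fun x hx y hy => by
  refine ⟨hg x hx y hy, ?_⟩
  have hprim : IsCaratheodorySolutionOn (fun t _ => g t) (fun z => ∫ t in x..z, g t)
      (Set.uIcc x y) := of_base_point fun z hz =>
    ⟨(hg x hx y hy).mono_set (Set.uIcc_subset_uIcc_left hz), by simp⟩
  obtain ⟨C, hC⟩ := ((hu x hx y hy).sub (hprim.absolutelyContinuousOnInterval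
    Set.ordConnected_uIcc Set.left_mem_uIcc Set.right_mem_uIcc)).const_of_ae_hasDerivAt_zero (by
      filter_upwards [hd x hx y hy, (hg x hx y hy).ae_hasDerivAt_integral] with t hut hgt htm
      simpa using (hut htm).sub (hgt htm x Set.left_mem_uIcc))
  have hends := (hC y Set.right_mem_uIcc).trans (hC x Set.left_mem_uIcc).symm
  simpa [sub_eq_iff_eq_add] using hends

theorem exp_mul {a g Φ q : ℝ → ℂ}
    (hΦ : IsCaratheodorySolutionOn (fun t _ => a t) Φ s)
    (hq : IsCaratheodorySolutionOn (fun t _ => Complex.exp (-Φ t) * g t) q s)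
    (hs : s.OrdConnected) :
    IsCaratheodorySolutionOn (fun t v => a t * v + g t) (fun t => Complex.exp (Φ t) * q t) s := by
  have hexp : ∀ t, Complex.exp (Φ t) * (Complex.exp (-Φ t) * g t) = g t := fun t => by
    rw [← mul_assoc, ← Complex.exp_add, add_neg_cancel, Complex.exp_zero, one_mul]
  have hΦac := fun x (hx : x ∈ s) y (hy : y ∈ s) =>
    absolutelyContinuousOnInterval_comp_of_contDiff Complex.contDiff_exp
      (hΦ.absolutelyContinuousOnInterval hs hx hy)
  have hac := fun x (hx : x ∈ s) y (hy : y ∈ s) =>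
    (hΦac x hx y hy).smul (hq.absolutelyContinuousOnInterval hs hx hy)
  have hmain := of_ae_hasDerivAt (g := fun t => a t * (Complex.exp (Φ t) * q t) + g t) hac
    (fun x hx y hy => ?_) fun x hx y hy => ?_
  · exact fun x hx y hy => hmain hx hy
  · refine ((hΦ hx hy).1.mul_continuousOn (hac x hx y hy).continuousOn).add ?_
    simpa only [Function.comp_apply, hexp] using
      (hq hx hy).1.continuousOn_mul (hΦac x hx y hy).continuousOn
  · filter_upwards [hΦ.ae_hasDerivAt hs hx hy, hq.ae_hasDerivAt hs hx hy] with t htΦ htq ht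
    refine ((htΦ ht).cexp.mul (htq ht)).congr_deriv ?_
    rw [hexp]
    ring

end IsCaratheodorySolutionOn

theorem isCaratheodorySolutionOn_pi_iff {ι : Type*} [Fintype ι] {E : ι → Type*}
    [∀ i, NormedAddCommGroup (E i)] [∀ i, NormedSpace ℝ (E i)] [∀ i, CompleteSpace (E i)]
    {f : ℝ → (∀ i, E i) → ∀ i, E i} {u : ℝ → ∀ i, E i} {s : Set ℝ} :
    IsCaratheodorySolutionOn f u s ↔
      ∀ i, IsCaratheodorySolutionOn (fun t _ => f t (u t) i) (fun t => u t i) s := by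
  have hint {x y} : IntervalIntegrable (fun t => f t (u t)) volume x y ↔
      ∀ i, IntervalIntegrable (fun t => f t (u t) i) volume x y := by
    simp only [intervalIntegrable_iff, IntegrableOn, integrable_pi_iff]
  have heval {x y} (h : IntervalIntegrable (fun t => f t (u t)) volume x y) (i : ι) :
      (∫ t in x..y, f t (u t)) i = ∫ t in x..y, f t (u t) i :=
    (ContinuousLinearMap.intervalIntegral_comp_comm
      (ContinuousLinearMap.proj (R := ℝ) (φ := E) i) h).symm
  refine ⟨fun h i x hx y hy => ⟨hint.1 (h hx hy).1 i, ?_⟩, fun h x hx y hy => ?_⟩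
  · simp only [← heval (h hx hy).1]
    exact congr_fun (h hx hy).2 i
  · have hxy := hint.2 fun i => (h i hx hy).1
    refine ⟨hxy, funext fun i => ?_⟩
    rw [Pi.add_apply, heval hxy]
    exact (h i hx hy).2

theorem integral_mul_exp_primitive {r : ℝ → ℝ} {x y : ℝ} (hr : IntervalIntegrable r volume x y) :
    ∫ t in x..y, r t * exp (∫ s in x..t, r s) = exp (∫ t in x..y, r t) - 1 := by
  have hmono := fun p (hp : p ∈ Set.uIcc x y) q (hq : q ∈ Set.uIcc x y) =>
    hr.mono_set (Set.uIcc_subset_uIcc hp hq)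
  have hprim : IsCaratheodorySolutionOn (fun t _ => r t) (fun z => ∫ t in x..z, r t)
      (Set.uIcc x y) := .of_base_point fun z hz => ⟨hmono x Set.left_mem_uIcc z hz, by simp⟩
  have hac := fun p (hp : p ∈ Set.uIcc x y) q (hq : q ∈ Set.uIcc x y) =>
    absolutelyContinuousOnInterval_comp_of_contDiff Real.contDiff_exp
      (hprim.absolutelyContinuousOnInterval Set.ordConnected_uIcc hp hq)
  have hsol := IsCaratheodorySolutionOn.of_ae_hasDerivAt
    (g := fun t => r t * exp (∫ s in x..t, r s)) hac
    (fun p hp q hq => (hmono p hp q hq).mul_continuousOn (hac p hp q hq).continuousOn)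
    fun p hp q hq => by
      filter_upwards [hprim.ae_hasDerivAt Set.ordConnected_uIcc hp hq] with t ht htm
      exact (ht htm).exp.congr_deriv (mul_comm _ _)
  have hends := (hsol Set.left_mem_uIcc Set.right_mem_uIcc).2
  simp only [Function.comp_apply, intervalIntegral.integral_same, exp_zero] at hends
  rw [hends, add_sub_cancel_left]

section IntegralKernel

open scoped BoundedContinuousFunction NNReal

variable {X 𝕜 E : Type*} [TopologicalSpace X] [SecondCountableTopology X] [MeasurableSpace X]
  [OpensMeasurableSpace X] {μ : Measure X} [NontriviallyNormedField 𝕜]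
  [NormedAddCommGroup E] [NormedSpace 𝕜 E] {k : X → ℝ}

theorem integrable_clm_apply_boundedContinuousFunction {A : X → E →L[𝕜] E} (hA : Integrable A μ)
    (v : X →ᵇ E) : Integrable (fun t => A t (v t)) μ :=
  (hA.norm.mul_const ‖v‖).mono'
    ((ContinuousLinearMap.id 𝕜 (E →L[𝕜] E)).aestronglyMeasurable_comp₂ hA.1
      v.continuous.aestronglyMeasurable)
    (.of_forall fun t => (A t).le_opNorm_of_le (v.norm_coe_le_norm t))

variable [NormedSpace ℝ E]

theorem tendsto_integral_clm_apply {Y : Type*} {l : Filter Y} [l.IsCountablyGenerated]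
    {K : Y → X → E →L[𝕜] E} {K₀ : X → E →L[𝕜] E} (hKm : ∀ y, AEStronglyMeasurable (K y) μ)
    (hk : Integrable k μ) (hKk : ∀ y t, ‖K y t‖ ≤ k t)
    (hK : ∀ᵐ t ∂μ, Tendsto (K · t) l (𝓝 (K₀ t))) (v : X →ᵇ E) :
    Tendsto (fun y => ∫ t, K y t (v t) ∂μ) l (𝓝 (∫ t, K₀ t (v t) ∂μ)) := by
  have hint := fun y => integrable_clm_apply_boundedContinuousFunction
    (hk.mono' (hKm y) (.of_forall (hKk y))) v
  refine tendsto_integral_filter_of_dominated_convergence _ (.of_forall fun y => (hint y).1)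
    (.of_forall fun y => .of_forall fun t => (K y t).le_of_opNorm_le_of_le (hKk y t)
      (v.norm_coe_le_norm t)) (hk.mul_const ‖v‖) ?_
  filter_upwards [hK] with t ht using
    ((ContinuousLinearMap.apply 𝕜 E (v t)).continuous.tendsto _).comp ht

theorem exists_boundedContinuousFunction_eq_add_integral_kernel [CompleteSpace E]
    {K : X → X → E →L[𝕜] E} {θ : ℝ≥0}
    (hKm : ∀ x, AEStronglyMeasurable (K x) μ) (hk : Integrable k μ)
    (hKk : ∀ x t, ‖K x t‖ ≤ k t) (hKc : ∀ x, ∀ᵐ t ∂μ, ContinuousAt (K · t) x)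
    (hθ : θ < 1) (hKθ : ∀ x, ∫ t, ‖K x t‖ ∂μ ≤ θ) (g : X →ᵇ E) :
    ∃ v : X →ᵇ E, ∀ x, v x = g x + ∫ t, K x t (v t) ∂μ := by
  have hKint := fun x => hk.mono' (hKm x) (.of_forall (hKk x))
  have hnorm (v : X →ᵇ E) (x) : ‖∫ t, K x t (v t) ∂μ‖ ≤ θ * ‖v‖ := calc
    ‖∫ t, K x t (v t) ∂μ‖ ≤ ∫ t, ‖K x t‖ * ‖v‖ ∂μ :=
      norm_integral_le_of_norm_le ((hKint x).norm.mul_const _)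
        (.of_forall fun t => (K x t).le_opNorm_of_le (v.norm_coe_le_norm t))
    _ ≤ θ * ‖v‖ := by
      rw [integral_mul_const]
      gcongr
      exact hKθ x
  let T (v : X →ᵇ E) : X →ᵇ E := g + .ofNormedAddCommGroup _
    (continuous_iff_continuousAt.2 fun x => tendsto_integral_clm_apply hKm hk hKk (hKc x) v) _
    (hnorm v)
  have hT : ContractingWith θ T := by
    refine ⟨hθ, LipschitzWith.of_dist_le_mul fun v w => ?_⟩
    refine (BoundedContinuousFunction.dist_le (by positivity)).2 fun x => ?_
    have hsub : T v x - T w x = ∫ t, K x t ((v - w) t) ∂μ := by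
      simp only [T, BoundedContinuousFunction.coe_add, Pi.add_apply, add_sub_add_left_eq_sub,
        BoundedContinuousFunction.coe_ofNormedAddCommGroup, BoundedContinuousFunction.coe_sub,
        Pi.sub_apply, map_sub]
      exact (integral_sub (integrable_clm_apply_boundedContinuousFunction (hKint x) v)
        (integrable_clm_apply_boundedContinuousFunction (hKint x) w)).symm
    rw [dist_eq_norm, hsub, dist_eq_norm]
    exact hnorm _ x
  exact ⟨hT.fixedPoint, fun x => (DFunLike.congr_fun hT.fixedPoint_isFixedPt x).symm⟩

end IntegralKernel

section StepKernel

variable {E : Type*} [NormedAddCommGroup E] [NormedSpace ℝ E]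

theorem continuousAt_indicator_Iic_apply {M : Type*} [Zero M] [TopologicalSpace M] {x t : ℝ}
    (htx : t ≠ x) (f : ℝ → M) : ContinuousAt (fun y => (Set.Iic y).indicator f t) x := by
  refine continuousAt_const.congr (f := fun _ => (Set.Iic x).indicator f t) ?_
  rcases htx.lt_or_gt with h | h
  · filter_upwards [lt_mem_nhds h] with y hy
    rw [Set.indicator_of_mem (Set.mem_Iic.2 h.le), Set.indicator_of_mem (Set.mem_Iic.2 hy.le)]
  · filter_upwards [gt_mem_nhds h] with y hy
    rw [Set.indicator_of_notMem (Set.notMem_Iic.2 h), Set.indicator_of_notMem (Set.notMem_Iic.2 hy)]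

theorem abs_indicator_Iic_one_sub (x y t : ℝ) :
    |(Set.Iic y).indicator (1 : ℝ → ℝ) t - (Set.Iic x).indicator 1 t| =
      (Set.uIoc x y).indicator 1 t := by
  rcases le_total x y with h | h <;>
    simp only [Set.indicator_apply, Set.mem_Iic, Set.mem_Ioc, Set.uIoc_of_le, Set.uIoc_of_ge, h,
      Pi.one_apply] <;> grind

theorem measurable_indicator_Iic_one_sub (x y : ℝ) :
    Measurable fun t => (Set.Iic y).indicator (1 : ℝ → ℝ) t - (Set.Iic x).indicator 1 t :=
  (measurable_one.indicator measurableSet_Iic).sub (measurable_one.indicator measurableSet_Iic)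

theorem integral_indicator_Iic_sub_smul (f : ℝ → E) (x y : ℝ) :
    ∫ t, ((Set.Iic y).indicator (1 : ℝ → ℝ) t - (Set.Iic x).indicator 1 t) • f t =
      ∫ t in x..y, f t := by
  have hsub {p q : ℝ} (hpq : p ≤ q) (t : ℝ) :
      ((Set.Iic q).indicator (1 : ℝ → ℝ) t - (Set.Iic p).indicator 1 t) • f t =
        (Set.Ioc p q).indicator f t := by
    by_cases htp : t ≤ p
    · simp [htp, htp.trans hpq]
    · by_cases htq : t ≤ q <;> simp [htp, htq, not_le.1 htp]
  rcases le_total x y with hxy | hyx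
  · simp only [hsub hxy, integral_indicator measurableSet_Ioc, intervalIntegral.integral_of_le hxy]
  · simp only [← neg_sub ((Set.Iic x).indicator (1 : ℝ → ℝ) _), neg_smul, hsub hyx, integral_neg,
      integral_indicator measurableSet_Ioc, intervalIntegral.integral_of_ge hyx]

theorem integral_uIoc_mul_exp_abs_primitive {r : ℝ → ℝ} {x y : ℝ}
    (hr : IntervalIntegrable r volume x y) (hr0 : ∀ t, 0 ≤ r t) :
    ∫ t in Set.uIoc x y, r t * exp |∫ s in x..t, r s| = exp |∫ t in x..y, r t| - 1 := by
  rcases le_total x y with hxy | hyx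
  · have habs (t) (ht : x ≤ t) : |∫ s in x..t, r s| = ∫ s in x..t, r s :=
      abs_of_nonneg (intervalIntegral.integral_nonneg ht fun s _ => hr0 s)
    rw [habs y hxy, ← integral_mul_exp_primitive hr, intervalIntegral.integral_of_le hxy,
      Set.uIoc_of_le hxy]
    exact setIntegral_congr_fun measurableSet_Ioc fun t ht => by simp only [habs t ht.1.le]
  · have habs (t) (ht : t ≤ x) : |∫ s in x..t, r s| = ∫ s in x..t, -r s := by
      rw [intervalIntegral.integral_neg, intervalIntegral.integral_symm, abs_neg, neg_neg,
        abs_of_nonneg (intervalIntegral.integral_nonneg ht fun s _ => hr0 s)]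
    have hexp := integral_mul_exp_primitive hr.neg
    simp only [Pi.neg_apply] at hexp
    rw [habs y hyx, ← hexp, intervalIntegral.integral_of_ge hyx,
      Set.uIoc_of_ge hyx, ← integral_neg]
    exact setIntegral_congr_fun measurableSet_Ioc fun t ht => by
      simp only [habs t ht.2, neg_mul, neg_neg]

-- `W` satisfies `W' = ± r W`, so an integral operator from `x₀` with kernel at most `θ r` is
-- `θ`-contractive for the norm `sup ‖u‖ / W`.
theorem exists_bielecki_weight {r : ℝ → ℝ} (hr : Integrable r) (hr0 : ∀ t, 0 ≤ r t) (x₀ : ℝ) :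
    ∃ (W : ℝ → ℝ) (C : ℝ), Continuous W ∧ (∀ x, 1 ≤ W x) ∧ (∀ x, W x ≤ C) ∧
      ∀ x, ∫ t in Set.uIoc x₀ x, r t * W t = W x - 1 := by
  refine ⟨fun x => exp |∫ t in x₀..x, r t|, exp (∫ t, r t), ?_, fun x => ?_, fun x => ?_,
    fun x => integral_uIoc_mul_exp_abs_primitive hr.intervalIntegrable hr0⟩
  · exact (intervalIntegral.continuous_primitive (fun _ _ => hr.intervalIntegrable) x₀).abs.rexp
  · exact one_le_exp (abs_nonneg _)
  · rw [exp_le_exp, intervalIntegral.abs_integral_eq_abs_integral_uIoc,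
      abs_of_nonneg (integral_nonneg hr0)]
    exact setIntegral_le_integral hr (.of_forall hr0)

end StepKernel

section LinearEquation

variable {E : Type*} [NormedAddCommGroup E] [NormedSpace ℝ E]

/-- The kernel of the equation `u x = u₀ + ∫ t in x₀..x, A t (u t)` for the weighted unknown
`v = W⁻¹ u`. The difference of the two indicators is the signed indicator of the interval between
`x₀` and `x`, so that no case distinction on the order of `x₀` and `x` is needed. -/
noncomputable def weightedVolterraKernel (A : ℝ → E →L[ℝ] E) (W : ℝ → ℝ) (x₀ x t : ℝ) :
    E →L[ℝ] E :=
  ((W x)⁻¹ * ((Set.Iic x).indicator 1 t - (Set.Iic x₀).indicator 1 t)) • W t • A t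

variable {A : ℝ → E →L[ℝ] E} {W : ℝ → ℝ} {x₀ x : ℝ}

theorem norm_weightedVolterraKernel (A : ℝ → E →L[ℝ] E) (W : ℝ → ℝ) (x₀ x t : ℝ) :
    ‖weightedVolterraKernel A W x₀ x t‖ =
      ‖(W x)⁻¹‖ * (Set.uIoc x₀ x).indicator (fun t => ‖W t • A t‖) t := by
  rw [weightedVolterraKernel, norm_smul, norm_mul, norm_eq_abs (_ - _), abs_indicator_Iic_one_sub]
  by_cases ht : t ∈ Set.uIoc x₀ x <;> simp [ht]

theorem aestronglyMeasurable_weightedVolterraKernel (hWA : AEStronglyMeasurable fun t => W t • A t)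
    (x₀ x : ℝ) : AEStronglyMeasurable (weightedVolterraKernel A W x₀ x) :=
  ((measurable_indicator_Iic_one_sub x₀ x).const_mul _).aestronglyMeasurable.smul hWA

theorem continuousAt_weightedVolterraKernel {t : ℝ} (hW : ContinuousAt W x) (hWx : W x ≠ 0)
    (htx : t ≠ x) : ContinuousAt (weightedVolterraKernel A W x₀ · t) x :=
  ((hW.inv₀ hWx).mul ((continuousAt_indicator_Iic_apply htx 1).sub_const _)).smul
    continuousAt_const

theorem integral_norm_weightedVolterraKernel_le (hW : ∀ x, 0 < W x)
    (hWint : ∫ t in Set.uIoc x₀ x, 2 * ‖A t‖ * W t = W x - 1) :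
    ∫ t, ‖weightedVolterraKernel A W x₀ x t‖ ≤ 1 / 2 := calc
  ∫ t, ‖weightedVolterraKernel A W x₀ x t‖ = ‖(W x)⁻¹‖ * ∫ t in Set.uIoc x₀ x, ‖W t • A t‖ := by
    simp only [norm_weightedVolterraKernel, integral_const_mul,
      integral_indicator measurableSet_uIoc]
  _ = (W x)⁻¹ * (1 / 2 * ∫ t in Set.uIoc x₀ x, 2 * ‖A t‖ * W t) := by
    have hnorm (t) : ‖W t • A t‖ = 1 / 2 * (2 * ‖A t‖ * W t) := by
      rw [norm_smul, norm_of_nonneg (hW t).le]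
      ring
    simp only [hnorm, integral_const_mul, norm_of_nonneg (inv_pos.2 (hW x)).le]
  _ = 1 / 2 - 1 / 2 * (W x)⁻¹ := by
    rw [hWint]
    field [(hW x).ne']
  _ ≤ 1 / 2 := sub_le_self _ (mul_nonneg one_half_pos.le (inv_pos.2 (hW x)).le)

theorem exists_weighted_volterra_solution [CompleteSpace E] (hW : Continuous W)
    (hW1 : ∀ x, 1 ≤ W x) (hWA : Integrable fun t => W t • A t)
    (hWint : ∀ x, ∫ t in Set.uIoc x₀ x, 2 * ‖A t‖ * W t = W x - 1) (u₀ : E) :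
    ∃ v : BoundedContinuousFunction ℝ E,
      ∀ x, W x • v x = u₀ + ∫ t in x₀..x, A t (W t • v t) := by
  have hWpos (x) : 0 < W x := one_pos.trans_le (hW1 x)
  have hWinv (x) : ‖(W x)⁻¹‖ ≤ 1 := by
    rw [norm_inv, norm_of_nonneg (hWpos x).le]
    exact inv_le_one_of_one_le₀ (hW1 x)
  have hWinvc : Continuous fun x => (W x)⁻¹ := hW.inv₀ fun x => (hWpos x).ne'
  have hle (x t) : ‖weightedVolterraKernel A W x₀ x t‖ ≤ ‖W t • A t‖ := by
    rw [norm_weightedVolterraKernel]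
    have hnonneg (t) : 0 ≤ ‖W t • A t‖ := norm_nonneg _
    exact (mul_le_of_le_one_left (Set.indicator_nonneg (fun t _ => hnonneg t) t) (hWinv x)).trans
      (Set.indicator_le_self' (fun t _ => hnonneg t) t)
  have hcont (x) : ∀ᵐ t, ContinuousAt (weightedVolterraKernel A W x₀ · t) x := by
    filter_upwards [Measure.ae_ne volume x] with t ht using
      continuousAt_weightedVolterraKernel hW.continuousAt (hWpos x).ne' ht
  obtain ⟨v, hv⟩ := exists_boundedContinuousFunction_eq_add_integral_kernel (θ := 1 / 2)
    (aestronglyMeasurable_weightedVolterraKernel hWA.1 x₀) hWA.norm hle hcont (by norm_num)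
    (fun x => by simpa using integral_norm_weightedVolterraKernel_le hWpos (hWint x))
    (.ofNormedAddCommGroup (fun x => (W x)⁻¹ • u₀) (by fun_prop) ‖u₀‖ fun x => by
      simpa only [norm_smul] using mul_le_of_le_one_left (norm_nonneg u₀) (hWinv x))
  refine ⟨v, fun x => ?_⟩
  rw [hv, ← integral_indicator_Iic_sub_smul]
  simp only [weightedVolterraKernel, mul_smul, _root_.smul_apply, integral_smul, map_smul,
    BoundedContinuousFunction.coe_ofNormedAddCommGroup, ← smul_add, smul_inv_smul₀ (hWpos x).ne']

theorem exists_isCaratheodorySolutionOn_univ_linear [CompleteSpace E] (hA : Integrable A)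
    (x₀ : ℝ) (u₀ : E) :
    ∃ u, u x₀ = u₀ ∧ IsCaratheodorySolutionOn (fun t v => A t v) u Set.univ := by
  obtain ⟨W, C, hWc, hW1, hWC, hWint⟩ :=
    exists_bielecki_weight (hA.norm.const_mul 2) (fun t => by positivity) x₀
  have hWA : Integrable fun t => W t • A t := hA.bdd_smul C hWc.aestronglyMeasurable
    (.of_forall fun x => (norm_of_nonneg (zero_le_one.trans (hW1 x))).trans_le (hWC x))
  obtain ⟨v, hv⟩ := exists_weighted_volterra_solution hWc hW1 hWA hWint u₀
  have hWAv := integrable_clm_apply_boundedContinuousFunction hWA v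
  simp only [_root_.smul_apply, ← map_smul] at hWAv
  have hu₀ : W x₀ • v x₀ = u₀ := by simp [hv x₀]
  exact ⟨fun x => W x • v x, hu₀, .of_base_point (b := x₀) fun y _ =>
    ⟨hWAv.intervalIntegrable, by simpa only [hu₀] using hv y⟩⟩

end LinearEquation

section Extension

variable {E : Type*} [NormedAddCommGroup E] [NormedSpace ℝ E] {a b : ℝ}

theorem IsCaratheodorySolutionOn.ite_le {f : ℝ → E → E} {u w : ℝ → E} (hab : a ≤ b)
    (hu : IsCaratheodorySolutionOn f u (Set.Icc a b))
    (hw : IsCaratheodorySolutionOn f w (Set.Ici b)) (hb : u b = w b) :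
    IsCaratheodorySolutionOn f (fun x => if x ≤ b then u x else w x) (Set.Ici a) := by
  have hleft : Set.EqOn u (fun x => if x ≤ b then u x else w x) (Set.Icc a b) :=
    fun x hx => (if_pos hx.2).symm
  have hright : Set.EqOn w (fun x => if x ≤ b then u x else w x) (Set.Ici b) := fun x hx => by
    rcases (Set.mem_Ici.1 hx).eq_or_lt with rfl | h
    · simp [hb]
    · simp [h.not_ge]
  refine .of_base_point (b := b) fun y hy => (le_total y b).elim (fun hyb => ?_) fun hby => ?_
  · exact hu.congr Set.ordConnected_Icc hleft (fun t ht => congr_arg (f t) (hleft ht))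
      (Set.right_mem_Icc.2 hab) ⟨hy, hyb⟩
  · exact hw.congr Set.ordConnected_Ici hright (fun t ht => congr_arg (f t) (hright ht))
      Set.self_mem_Ici hby

theorem exists_isCaratheodorySolutionOn_Ici_linear_extension [CompleteSpace E]
    {A : ℝ → E →L[ℝ] E} {w : ℝ → E} (hab : a ≤ b) (hA : IntegrableOn A (Set.Icc a b))
    (hw : IsCaratheodorySolutionOn (fun t v => A t v) w (Set.Ici b)) :
    ∃ u, Set.EqOn u w (Set.Ici b) ∧
      IsCaratheodorySolutionOn (fun t v => A t v) u (Set.Ici a) := by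
  obtain ⟨u, hub, hu⟩ := exists_isCaratheodorySolutionOn_univ_linear
    ((integrable_indicator_iff (f := A) measurableSet_Icc).2 hA) b (w b)
  have huA : IsCaratheodorySolutionOn (fun t v => A t v) u (Set.Icc a b) :=
    (hu.mono (Set.subset_univ _)).congr Set.ordConnected_Icc (Set.eqOn_refl u _) fun t ht => by
      rw [Set.indicator_of_mem ht]
  refine ⟨_, fun x hx => ?_, huA.ite_le hab hw hub⟩
  rcases (Set.mem_Ici.1 hx).eq_or_lt with rfl | h
  · simp [hub]
  · simp [h.not_ge]

end Extension

section Dichotomy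

/-- Levinson's dichotomy condition on `s`, with constant `K`, for a single difference `D` of
exponents: either `D` tends to `-∞` and its increments are bounded above by `K`, or its increments
are bounded below by `-K`. -/
def IsLevinsonDichotomyOn (D : ℝ → ℝ) (K : ℝ) (s : Set ℝ) : Prop :=
  (Tendsto D atTop atBot ∧ ∀ x ∈ s, ∀ y ∈ s, x ≤ y → D y - D x ≤ K) ∨
    ∀ x ∈ s, ∀ y ∈ s, x ≤ y → -K ≤ D y - D x

theorem IsLevinsonDichotomyOn.mono {D : ℝ → ℝ} {K : ℝ} {s s' : Set ℝ}
    (h : IsLevinsonDichotomyOn D K s) (hs : s' ⊆ s) : IsLevinsonDichotomyOn D K s' :=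
  h.imp (fun h => ⟨h.1, fun x hx y hy => h.2 x (hs hx) y (hs hy)⟩)
    fun h x hx y hy => h x (hs hx) y (hs hy)

theorem IsLevinsonDichotomyOn.comp_max {D : ℝ → ℝ} {K a : ℝ}
    (h : IsLevinsonDichotomyOn D K (Set.Ici a)) :
    IsLevinsonDichotomyOn (fun x => D (max x a)) K Set.univ := by
  have hmax (x) : max x a ∈ Set.Ici a := le_max_right x a
  refine h.imp (fun ⟨hD, hK⟩ => ⟨hD.comp (tendsto_atTop_mono (le_max_left · a) tendsto_id), ?_⟩)
    fun hK => ?_ <;>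
  exact fun x _ y _ hxy => hK _ (hmax x) _ (hmax y) (max_le_max_right a hxy)

theorem isLevinsonDichotomyOn_const_mul_rpow (c : ℝ) {p : ℝ} (hp : 0 < p) :
    IsLevinsonDichotomyOn (fun x => c * x ^ p) 0 (Set.Ici 0) := by
  have hmono {x y : ℝ} (hx : x ∈ Set.Ici (0 : ℝ)) (hxy : x ≤ y) : 0 ≤ y ^ p - x ^ p :=
    sub_nonneg.2 (rpow_le_rpow hx hxy hp.le)
  rcases lt_or_ge c 0 with hc | hc
  · refine .inl ⟨(tendsto_rpow_atTop hp).const_mul_atTop_of_neg hc, fun x hx y _ hxy => ?_⟩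
    rw [← mul_sub]
    exact mul_nonpos_of_nonpos_of_nonneg hc.le (hmono hx hxy)
  · refine .inr fun x hx y _ hxy => ?_
    rw [← mul_sub, neg_zero]
    exact mul_nonneg hc (hmono hx hxy)

/-- The Green kernel of `u' = Φ' u`: `c = 0` integrates from `-∞`, `c = 1` from `∞`. -/
noncomputable def greenKernel (Φ : ℝ → ℂ) (c x t : ℝ) : ℂ :=
  Complex.exp (Φ x - Φ t) * ((Set.Iic x).indicator 1 t - c : ℝ)

variable {Φ : ℝ → ℂ}

theorem measurable_greenKernel (hΦ : Continuous Φ) (c x : ℝ) : Measurable (greenKernel Φ c x) := by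
  have hind : Measurable fun t => (Set.Iic x).indicator (1 : ℝ → ℝ) t - c :=
    (measurable_one.indicator measurableSet_Iic).sub_const c
  have hexp : Measurable fun t => Complex.exp (Φ x - Φ t) := by fun_prop
  exact hexp.mul hind.complex_ofReal

theorem continuousAt_greenKernel (hΦ : Continuous Φ) (c : ℝ) {x t : ℝ} (htx : t ≠ x) :
    ContinuousAt (greenKernel Φ c · t) x :=
  (hΦ.sub continuous_const).cexp.continuousAt.mul
    (Complex.continuous_ofReal.continuousAt.comp
      ((continuousAt_indicator_Iic_apply htx 1).sub continuousAt_const))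

theorem exists_greenKernel_norm_le_and_tendsto {K : ℝ}
    (hD : IsLevinsonDichotomyOn (fun x => (Φ x).re) K Set.univ) :
    ∃ c : ℝ, (∀ x t, ‖greenKernel Φ c x t‖ ≤ exp K) ∧
      ∀ t, Tendsto (greenKernel Φ c · t) atTop (𝓝 0) := by
  rcases hD with ⟨hbot, hK⟩ | hK
  · refine ⟨0, fun x t => ?_, fun t => ?_⟩
    · by_cases htx : t ≤ x
      · simpa [greenKernel, htx, Complex.norm_exp] using hK t trivial x trivial htx
      · simpa [greenKernel, htx] using (exp_pos K).le
    · refine Tendsto.congr' (f₁ := fun x => Complex.exp (Φ x - Φ t)) ?_ ?_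
      · filter_upwards [eventually_ge_atTop t] with x hx
        simp [greenKernel, hx]
      · refine Complex.tendsto_exp_comap_re_atBot.comp (tendsto_comap_iff.2 ?_)
        simpa [Function.comp_def, sub_eq_add_neg] using tendsto_atBot_add_const_right _ _ hbot
  · refine ⟨1, fun x t => ?_, fun t => ?_⟩
    · by_cases htx : t ≤ x
      · simpa [greenKernel, htx] using (exp_pos K).le
      · simpa [greenKernel, htx, Complex.norm_exp, add_comm K] using
          hK x trivial t trivial (not_le.1 htx).le
    · refine tendsto_const_nhds.congr' ?_
      filter_upwards [eventually_ge_atTop t] with x hx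
      simp [greenKernel, hx]

end Dichotomy

section Amplitude

theorem isCaratheodorySolutionOn_integral_greenKernel {Φ h : ℝ → ℂ} {c C : ℝ}
    (hΦ : Continuous Φ) (hh : Integrable h) (hG : ∀ x t, ‖greenKernel Φ c x t‖ ≤ C) :
    IsCaratheodorySolutionOn (fun t _ => Complex.exp (-Φ t) * h t)
      (fun x => Complex.exp (-Φ x) * ∫ t, greenKernel Φ c x t * h t) Set.univ := fun x _ y _ => by
  refine ⟨hh.intervalIntegrable.continuousOn_mul hΦ.neg.cexp.continuousOn, ?_⟩
  have hGh (z) : Integrable fun t => Complex.exp (-Φ z) * (greenKernel Φ c z t * h t) :=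
    (hh.bdd_mul (measurable_greenKernel hΦ c z).aestronglyMeasurable
      (.of_forall (hG z))).const_mul _
  simp only [← sub_eq_iff_eq_add']
  rw [← integral_indicator_Iic_sub_smul, ← integral_const_mul,
    ← integral_const_mul, ← integral_sub (hGh y) (hGh x)]
  refine integral_congr_ae (.of_forall fun t => ?_)
  have hexp (z) : Complex.exp (-Φ z) * Complex.exp (Φ z - Φ t) = Complex.exp (-Φ t) := by
    rw [← Complex.exp_add]
    ring_nf
  simp only [greenKernel, ← mul_assoc, hexp, Complex.real_smul, Complex.ofReal_sub]
  ring

variable {ι : Type*} [Fintype ι]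

/-- The kernel of the integral equation `v = e + ∫ G(x, t) R(t) v(t) dt`, where `G` is the diagonal
matrix of the Green kernels of the equations `u' = Φᵢ' u`. -/
noncomputable def greenOperator (Φ : ι → ℝ → ℂ) (c : ι → ℝ) (R : ℝ → (ι → ℂ) →L[ℂ] (ι → ℂ))
    (x t : ℝ) : (ι → ℂ) →L[ℂ] (ι → ℂ) :=
  (ContinuousLinearMap.mul ℂ (ι → ℂ) fun i => greenKernel (Φ i) (c i) x t).comp (R t)

variable {Φ : ι → ℝ → ℂ} {c : ι → ℝ} {R : ℝ → (ι → ℂ) →L[ℂ] (ι → ℂ)}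

theorem norm_greenOperator_le {C : ℝ} (hG : ∀ i x t, ‖greenKernel (Φ i) (c i) x t‖ ≤ C)
    (hC : 0 ≤ C) (x t : ℝ) : ‖greenOperator Φ c R x t‖ ≤ C * ‖R t‖ := by
  refine (ContinuousLinearMap.opNorm_comp_le _ _).trans ?_
  gcongr
  exact (ContinuousLinearMap.opNorm_mul_apply_le ℂ _ _).trans
    ((pi_norm_le_iff_of_nonneg hC).2 fun i => hG i x t)

theorem aestronglyMeasurable_greenOperator (hΦ : ∀ i, Continuous (Φ i))
    (hR : AEStronglyMeasurable R) (x : ℝ) : AEStronglyMeasurable (greenOperator Φ c R x) :=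
  (ContinuousLinearMap.compL ℂ (ι → ℂ) (ι → ℂ) (ι → ℂ)).aestronglyMeasurable_comp₂
    ((ContinuousLinearMap.mul ℂ (ι → ℂ)).continuous.comp_aestronglyMeasurable
      (measurable_pi_lambda _ fun i =>
        measurable_greenKernel (hΦ i) (c i) x).aestronglyMeasurable) hR

theorem tendsto_greenOperator {l : Filter ℝ} {t : ℝ} {p : ι → ℂ}
    (h : ∀ i, Tendsto (greenKernel (Φ i) (c i) · t) l (𝓝 (p i))) :
    Tendsto (greenOperator Φ c R · t) l
      (𝓝 ((ContinuousLinearMap.mul ℂ (ι → ℂ) p).comp (R t))) :=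
  (((ContinuousLinearMap.compL ℂ (ι → ℂ) (ι → ℂ) (ι → ℂ)).flip (R t) ∘L
    ContinuousLinearMap.mul ℂ (ι → ℂ)).continuous.tendsto p).comp (tendsto_pi_nhds.2 h)

theorem integrable_greenOperator {C : ℝ} (hΦ : ∀ i, Continuous (Φ i))
    (hG : ∀ i x t, ‖greenKernel (Φ i) (c i) x t‖ ≤ C) (hC : 0 ≤ C) (hR : Integrable R) (x : ℝ) :
    Integrable (greenOperator Φ c R x) :=
  (hR.norm.const_mul C).mono' (aestronglyMeasurable_greenOperator hΦ hR.1 x)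
    (.of_forall (norm_greenOperator_le hG hC x))

theorem exists_eq_add_integral_greenOperator {C : ℝ} (hΦ : ∀ i, Continuous (Φ i))
    (hG : ∀ i x t, ‖greenKernel (Φ i) (c i) x t‖ ≤ C) (hC : 0 ≤ C) (hR : Integrable R)
    (hRC : C * ∫ t, ‖R t‖ < 1) (e : ι → ℂ) :
    ∃ v : BoundedContinuousFunction ℝ (ι → ℂ),
      ∀ x, v x = e + ∫ t, greenOperator Φ c R x t (v t) := by
  have hcont (x) : ∀ᵐ t, ContinuousAt (greenOperator Φ c R · t) x := by
    filter_upwards [Measure.ae_ne volume x] with t ht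
    exact tendsto_greenOperator fun i => continuousAt_greenKernel (hΦ i) (c i) ht
  have hle (x) : ∫ t, ‖greenOperator Φ c R x t‖ ≤ C * ∫ t, ‖R t‖ := by
    rw [← integral_const_mul]
    exact integral_mono (integrable_greenOperator hΦ hG hC hR x).norm (hR.norm.const_mul C)
      (norm_greenOperator_le hG hC x)
  exact exists_boundedContinuousFunction_eq_add_integral_kernel
    (θ := ⟨C * ∫ t, ‖R t‖, by positivity⟩) (aestronglyMeasurable_greenOperator hΦ hR.1)
    (hR.norm.const_mul C) (norm_greenOperator_le hG hC) hcont hRC hle (.const ℝ e)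

-- `he` says that the constant `e` solves the unperturbed system `v i' = (Φ i)' v i`.
theorem exists_tendsto_amplitude_of_dichotomy {K : ℝ} {e : ι → ℂ} (hΦ : ∀ i, Continuous (Φ i))
    (hD : ∀ i, IsLevinsonDichotomyOn (fun x => (Φ i x).re) K Set.univ) (hR : Integrable R)
    (hRK : exp K * ∫ t, ‖R t‖ < 1) (he : ∀ i, e i = 0 ∨ Φ i = 0) :
    ∃ v : ℝ → ι → ℂ, Tendsto v atTop (𝓝 e) ∧ ∀ i, IsCaratheodorySolutionOn
      (fun t _ => Complex.exp (-Φ i t) * R t (v t) i) (fun x => Complex.exp (-Φ i x) * v x i)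
      Set.univ := by
  choose c hG hGlim using fun i => exists_greenKernel_norm_le_and_tendsto (hD i)
  obtain ⟨v, hv⟩ := exists_eq_add_integral_greenOperator hΦ hG (exp_pos K).le hR hRK e
  have hRv := integrable_clm_apply_boundedContinuousFunction hR v
  refine ⟨v, ?_, fun i => ?_⟩
  · have hlim := tendsto_integral_clm_apply (aestronglyMeasurable_greenOperator hΦ hR.1)
      (hR.norm.const_mul _) (norm_greenOperator_le hG (exp_pos K).le)
      (.of_forall fun t => tendsto_greenOperator (p := 0) fun i => hGlim i t) v
    simpa [← hv] using hlim.const_add e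
  · have hvi (x) : Complex.exp (-Φ i x) * v x i = e i + Complex.exp (-Φ i x) *
        ∫ t, greenKernel (Φ i) (c i) x t * R t (v t) i := by
      have hint := integrable_clm_apply_boundedContinuousFunction
        (integrable_greenOperator hΦ hG (exp_pos K).le hR x) v
      rw [hv, Pi.add_apply, eval_integral fun j => hint.eval j, mul_add]
      congr 1
      rcases he i with h | h <;> simp [h]
    simp only [hvi]
    exact (isCaratheodorySolutionOn_integral_greenKernel (hΦ i) (hRv.eval i) (hG i)).const_add _

end Amplitude

section Levinson

variable {ι : Type*} [Fintype ι] {α Λ : ℝ → ι → ℂ} {R : ℝ → (ι → ℂ) →L[ℂ] (ι → ℂ)} {a b K : ℝ}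

theorem isCaratheodorySolutionOn_exp_smul_of_amplitude {v : ℝ → ι → ℂ} {l : ℝ → ℂ} {s : Set ℝ}
    (hs : s.OrdConnected) (hΛ : IsCaratheodorySolutionOn (fun t _ => α t) Λ s)
    (hv : ∀ i, IsCaratheodorySolutionOn (fun t _ => Complex.exp (-(Λ t i - l t)) * R t (v t) i)
      (fun t => Complex.exp (-(Λ t i - l t)) * v t i) s) :
    IsCaratheodorySolutionOn (fun t u => α t * u + R t u)
      (fun t => Complex.exp (l t) • v t) s := by
  refine isCaratheodorySolutionOn_pi_iff.2 fun i => ?_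
  have hq := (hv i).congr (g := fun t _ =>
    Complex.exp (-Λ t i) * R t (Complex.exp (l t) • v t) i) hs (Set.eqOn_refl _ s) fun t _ => by
      rw [map_smul, Pi.smul_apply, smul_eq_mul, ← mul_assoc, ← Complex.exp_add, neg_sub,
        sub_eq_neg_add]
  have hexp (t : ℝ) : Complex.exp (Λ t i) * (Complex.exp (-(Λ t i - l t)) * v t i) =
      Complex.exp (l t) * v t i := by
    rw [← mul_assoc, ← Complex.exp_add]
    ring_nf
  exact ((isCaratheodorySolutionOn_pi_iff.1 hΛ i).exp_mul hq hs).congr hs (fun t _ => hexp t)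
    fun t _ => by simp only [hexp, Pi.add_apply, Pi.mul_apply, Pi.smul_apply, smul_eq_mul]

theorem exists_isCaratheodorySolutionOn_Ici_levinson_extension {w : ℝ → ι → ℂ} (hab : a ≤ b)
    (hα : IntegrableOn α (Set.Icc a b)) (hR : IntegrableOn R (Set.Icc a b))
    (hw : IsCaratheodorySolutionOn (fun t u => α t * u + R t u) w (Set.Ici b)) :
    ∃ u, Set.EqOn u w (Set.Ici b) ∧
      IsCaratheodorySolutionOn (fun t u => α t * u + R t u) u (Set.Ici a) :=
  exists_isCaratheodorySolutionOn_Ici_linear_extension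
    (A := fun t => (ContinuousLinearMap.mul ℂ (ι → ℂ) (α t) + R t).restrictScalars ℝ) hab
    ((ContinuousLinearMap.restrictScalarsL ℂ (ι → ℂ) (ι → ℂ) ℝ ℝ).integrable_comp
      (((ContinuousLinearMap.mul ℂ (ι → ℂ)).integrable_comp hα).add hR)) hw

variable [DecidableEq ι]

theorem exists_levinson_solution_of_integral_lt (k : ι)
    (hΛ : IsCaratheodorySolutionOn (fun t _ => α t) Λ (Set.Ici b))
    (hD : ∀ i, IsLevinsonDichotomyOn (fun x => (Λ x i - Λ x k).re) K (Set.Ici b))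
    (hR : IntegrableOn R (Set.Ici b)) (hRK : exp K * ∫ t in Set.Ici b, ‖R t‖ < 1) :
    ∃ u, IsCaratheodorySolutionOn (fun t u => α t * u + R t u) u (Set.Ici b) ∧
      Tendsto (fun x => Complex.exp (-Λ x k) • u x) atTop (𝓝 (Pi.single k 1)) := by
  have hmax {x : ℝ} (hx : x ∈ Set.Ici b) : max x b = x := max_eq_left hx
  have hcont (i) : Continuous fun x => Λ (max x b) i := (continuous_apply i).comp
    (hΛ.continuousOn_Ici.comp_continuous (by fun_prop) fun x => le_max_right x b)
  obtain ⟨v, hvlim, hv⟩ := exists_tendsto_amplitude_of_dichotomy (e := Pi.single k 1)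
    (Φ := fun i x => Λ (max x b) i - Λ (max x b) k) (fun i => (hcont i).sub (hcont k))
    (fun i => (hD i).comp_max)
    ((integrable_indicator_iff (f := R) measurableSet_Ici).2 hR)
    (by simpa only [norm_indicator_eq_indicator_norm, integral_indicator measurableSet_Ici])
    fun i => (eq_or_ne i k).elim (fun h => .inr (by ext; simp [h])) fun h => .inl (by simp [h])
  refine ⟨_, isCaratheodorySolutionOn_exp_smul_of_amplitude (v := v) (l := (Λ · k))
    Set.ordConnected_Ici hΛ fun i => ((hv i).mono (Set.subset_univ _)).congr Set.ordConnected_Ici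
      (fun x hx => by simp only [hmax hx]) fun t ht => by
        simp only [hmax ht, Set.indicator_of_mem ht], hvlim.congr fun x => ?_⟩
  rw [smul_smul, ← Complex.exp_add, neg_add_cancel, Complex.exp_zero, one_smul]

theorem exists_levinson_solution (k : ι)
    (hΛ : IsCaratheodorySolutionOn (fun t _ => α t) Λ (Set.Ici a))
    (hD : ∀ i, IsLevinsonDichotomyOn (fun x => (Λ x i - Λ x k).re) K (Set.Ici a))
    (hR : IntegrableOn R (Set.Ici a)) :
    ∃ u, IsCaratheodorySolutionOn (fun t u => α t * u + R t u) u (Set.Ici a) ∧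
      Tendsto (fun x => Complex.exp (-Λ x k) • u x) atTop (𝓝 (Pi.single k 1)) := by
  have hsmall : Tendsto (fun b => exp K * ∫ t in Set.Ici b, ‖R t‖) atTop (𝓝 0) := by
    simpa using (tendsto_integral_Ici_zero tendsto_id).const_mul (exp K)
  obtain ⟨b, hRK, hab⟩ := ((hsmall.eventually_lt_const one_pos).and (eventually_ge_atTop a)).exists
  have hsub : Set.Ici b ⊆ Set.Ici a := Set.Ici_subset_Ici.2 hab
  obtain ⟨w, hw, hwlim⟩ := exists_levinson_solution_of_integral_lt k (hΛ.mono hsub)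
    (fun i => (hD i).mono hsub) (hR.mono_set hsub) hRK
  have hα : IntegrableOn α (Set.Icc a b) :=
    (intervalIntegrable_iff_integrableOn_Icc_of_le hab).1 (hΛ Set.self_mem_Ici hab).1
  obtain ⟨u, huw, hu⟩ := exists_isCaratheodorySolutionOn_Ici_levinson_extension hab hα
    (hR.mono_set Set.Icc_subset_Ici_self) hw
  refine ⟨u, hu, hwlim.congr' ?_⟩
  filter_upwards [eventually_ge_atTop b] with x hx
  rw [huw hx]

end Levinson

theorem integrable_linearMap_apply_matrix {X m n 𝕜 E : Type*} [MeasurableSpace X]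
    {μ : Measure X} [Finite m] [Finite n] [NontriviallyNormedField 𝕜] [NormedAddCommGroup E]
    [NormedSpace 𝕜 E] {M : X → Matrix m n 𝕜}
    (hM : ∀ i j, Integrable (fun t => M t i j) μ) (L : Matrix m n 𝕜 →ₗ[𝕜] E) :
    Integrable (fun t => L (M t)) μ := by
  classical
  have := Fintype.ofFinite m
  have := Fintype.ofFinite n
  have hsum (t) : L (M t) = ∑ i, ∑ j, M t i j • L (Matrix.single i j 1) := by
    conv_lhs => rw [Matrix.matrix_eq_sum_single (M t)]
    simp only [map_sum, ← map_smul, Matrix.smul_single, smul_eq_mul, mul_one]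
  simp only [hsum]
  exact integrable_finsetSum _ fun i _ => integrable_finsetSum _ fun j _ => (hM i j).smul_const _

theorem isCaratheodorySolutionOn_inv_rpow_primitive {γ : ℝ} (hγ : γ < 1) (d : ℂ) :
    IsCaratheodorySolutionOn (fun t _ => d * ((t ^ γ)⁻¹ : ℝ))
      (fun x => d * (x ^ (1 - γ) / (1 - γ) : ℝ)) (Set.Ici 0) := fun x hx y hy => by
  have hγ' : -1 < -γ := neg_lt_neg hγ
  have hneg : Set.EqOn (fun t : ℝ => t ^ (-γ)) (fun t => (t ^ γ)⁻¹) (Set.uIcc x y) :=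
    fun t ht => rpow_neg (Set.ordConnected_Ici.uIcc_subset hx hy ht) γ
  have hint : IntervalIntegrable (fun t : ℝ => (t ^ γ)⁻¹) volume x y :=
    (intervalIntegral.intervalIntegrable_rpow' hγ').congr (hneg.mono Set.uIoc_subset_uIcc)
  refine ⟨IntervalIntegrable.const_mul ⟨hint.1.ofReal, hint.2.ofReal⟩ d, ?_⟩
  rw [intervalIntegral.integral_const_mul, intervalIntegral.integral_ofReal,
    ← intervalIntegral.integral_congr hneg, integral_rpow (.inl hγ'), neg_add_eq_sub, ← mul_add,
    ← Complex.ofReal_add, sub_div, add_sub_cancel]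

theorem exists_levinson_solution_inv_rpow_diagonal {ι : Type*} [Fintype ι] [DecidableEq ι] {γ : ℝ}
    (hγ : γ < 1) (d : ι → ℂ) {R : ℝ → Matrix ι ι ℂ}
    (hR : ∀ i j, IntegrableOn (fun x => R x i j) (Set.Ioi 0)) (k : ι) :
    ∃ u, IsCaratheodorySolutionOn
        (fun t v => ((((t ^ γ)⁻¹ : ℝ) : ℂ) • Matrix.diagonal d + R t).mulVec v) u (Set.Ici 0) ∧
      Tendsto (fun x => Complex.exp (-(d k * (x ^ (1 - γ) / (1 - γ) : ℝ))) • u x) atTop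
        (𝓝 (Pi.single k 1)) := by
  have hD (i) : IsLevinsonDichotomyOn (fun x => (d i * (x ^ (1 - γ) / (1 - γ) : ℝ) -
      d k * (x ^ (1 - γ) / (1 - γ) : ℝ)).re) 0 (Set.Ici 0) := by
    convert isLevinsonDichotomyOn_const_mul_rpow ((d i - d k).re / (1 - γ)) (sub_pos.2 hγ)
      using 2 with x
    rw [← sub_mul, Complex.re_mul_ofReal, mul_div_left_comm, mul_comm]
  let L : Matrix ι ι ℂ ≃ₗ[ℂ] (ι → ℂ) →L[ℂ] (ι → ℂ) :=
    Matrix.toLin'.trans LinearMap.toContinuousLinearMap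
  have hLR : IntegrableOn (fun t => L (R t)) (Set.Ici 0) := integrable_linearMap_apply_matrix
    (fun i j => (hR i j).congr_set_ae Ioi_ae_eq_Ici.symm) L.toLinearMap
  obtain ⟨u, hu, hlim⟩ := exists_levinson_solution k (isCaratheodorySolutionOn_pi_iff.2
    fun i => isCaratheodorySolutionOn_inv_rpow_primitive hγ (d i)) hD hLR
  refine ⟨u, hu.congr Set.ordConnected_Ici (Set.eqOn_refl u _) fun t _ => ?_, hlim⟩
  ext i
  have hL : L (R t) (u t) = (R t).mulVec (u t) := rfl
  simp only [Pi.add_apply, Pi.mul_apply, Pi.smul_apply, smul_eq_mul, hL, Matrix.add_mulVec,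
    Matrix.smul_mulVec, Matrix.mulVec_diagonal]
  ring

theorem levinson_dichotomy_general (β : ℝ) {γ : ℝ} (hγ : γ < 1)
    {R : ℝ → Matrix (Fin 2) (Fin 2) ℂ}
    (hR : ∀ i j, IntegrableOn (fun x => R x i j) (Set.Ioi 0)) :
    ∃ uP uM : ℝ → (Fin 2 → ℂ),
      IsCaratheodorySolutionOn (fun t v => (((β / t ^ γ : ℝ) : ℂ) •
        (!![1,0;0,-1] : Matrix (Fin 2) (Fin 2) ℂ) + R t).mulVec v) uP (Set.Ici 0) ∧
      IsCaratheodorySolutionOn (fun t v => (((β / t ^ γ : ℝ) : ℂ) •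
        (!![1,0;0,-1] : Matrix (Fin 2) (Fin 2) ℂ) + R t).mulVec v) uM (Set.Ici 0) ∧
      Tendsto (fun x => ((Real.exp (-(β * x ^ (1-γ) / (1-γ))) : ℝ) : ℂ) • uP x)
        atTop (𝓝 ![1,0]) ∧
      Tendsto (fun x => ((Real.exp (β * x ^ (1-γ) / (1-γ)) : ℝ) : ℂ) • uM x)
        atTop (𝓝 ![0,1]) := by
  have hdiag (t : ℝ) : (((t ^ γ)⁻¹ : ℝ) : ℂ) • Matrix.diagonal ![(β : ℂ), -β] =
      ((β / t ^ γ : ℝ) : ℂ) • !![1,0;0,-1] := by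
    ext i j
    fin_cases i <;> fin_cases j <;> simp [div_eq_inv_mul]
  have hsingle₀ : Pi.single 0 1 = ![(1 : ℂ), 0] := by ext i; fin_cases i <;> rfl
  have hsingle₁ : Pi.single 1 1 = ![(0 : ℂ), 1] := by ext i; fin_cases i <;> rfl
  obtain ⟨uP, hP, hPlim⟩ := exists_levinson_solution_inv_rpow_diagonal hγ ![(β : ℂ), -β] hR 0
  obtain ⟨uM, hM, hMlim⟩ := exists_levinson_solution_inv_rpow_diagonal hγ ![(β : ℂ), -β] hR 1
  simp only [hdiag] at hP hM
  refine ⟨uP, uM, hP, hM, ?_, ?_⟩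
  · simpa [hsingle₀, mul_div_assoc] using hPlim
  · simpa [hsingle₁, mul_div_assoc] using hMlim

/-- Levinson-type theorem, special case: the system
`u′ = ((β/x^γ) diag(1,−1) + R(x)) u` with integrable remainder has an exponentially
growing solution asymptotic to `e₊` and an exponentially decaying solution asymptotic
to `e₋`.  Solutions are recorded in integral form. -/
theorem levinson_dichotomy (β γ : ℝ) (hβ : 0 < β) (hγ : γ ∈ Set.Ioo (1/2:ℝ) 1)
    (R : ℝ → Matrix (Fin 2) (Fin 2) ℂ)
    (hRmeas : ∀ i j, Measurable fun x => R x i j)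
    (hRint : ∀ i j, IntegrableOn (fun x => R x i j) (Set.Ioi 0)) :
    ∃ uP uM : ℝ → (Fin 2 → ℂ),
      (∀ x y : ℝ, 0 < x → 0 < y →
        uP y = uP x + ∫ t in x..y,
          ((((β / t ^ γ : ℝ) : ℂ) • (!![1,0;0,-1] : Matrix (Fin 2) (Fin 2) ℂ) + R t)).mulVec (uP t)) ∧
      (∀ x y : ℝ, 0 < x → 0 < y →
        uM y = uM x + ∫ t in x..y,
          ((((β / t ^ γ : ℝ) : ℂ) • (!![1,0;0,-1] : Matrix (Fin 2) (Fin 2) ℂ) + R t)).mulVec (uM t)) ∧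
      Tendsto (fun x => ((Real.exp (-(β * x ^ (1-γ) / (1-γ))) : ℝ) : ℂ) • uP x)
        atTop (𝓝 ![1,0]) ∧
      Tendsto (fun x => ((Real.exp (β * x ^ (1-γ) / (1-γ)) : ℝ) : ℂ) • uM x)
        atTop (𝓝 ![0,1]) := by
  obtain ⟨uP, uM, hP, hM, hlim⟩ := levinson_dichotomy_general β hγ.2 hRint
  exact ⟨uP, uM, fun x y hx hy => (hP hx.le hy.le).2, fun x y hx hy => (hM hx.le hy.le).2, hlim⟩
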